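/- arXiv:2506.05728 — 5 statements merged into one kernel-verified Lean document; each statement's English description precedes it below -/
import Mathlib

section
/- Let m, n be positive integers, let Σ be a symmetric positive definite real m×m matrix, R a symmetric positive definite real n×n matrix, and C an arbitrary real n×m matrix. Then the matrices Σ⁻¹ + Cᵀ R⁻¹ C and C Σ Cᵀ + R are invertible, and, with the Kalman gain K := Σ Cᵀ (C Σ Cᵀ + R)⁻¹, one has the identity (Σ⁻¹ + Cᵀ R⁻¹ C)⁻¹ = (I − K C) Σ. -/
open Matrix

theorem inv_inv_add_mul_inv_mul_eq {m n α : Type*} [Fintype m] [DecidableEq m] [Fintype n]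
    [DecidableEq n] [CommRing α] {S : Matrix m m α} {R : Matrix n n α} {U : Matrix m n α}
    {V : Matrix n m α} (hS : IsUnit S) (hR : IsUnit R) (hVSU : IsUnit (V * S * U + R)) :
    (S⁻¹ + U * R⁻¹ * V)⁻¹ = (1 - S * U * (V * S * U + R)⁻¹ * V) * S := by
  have inv_inv_S : S⁻¹⁻¹ = S := nonsing_inv_nonsing_inv S (S.isUnit_iff_isUnit_det.mp hS)
  have inv_inv_R : R⁻¹⁻¹ = R := nonsing_inv_nonsing_inv R (R.isUnit_iff_isUnit_det.mp hR)
  have woodbury := add_mul_mul_inv_eq_sub S⁻¹ U R⁻¹ V (isUnit_nonsing_inv_iff.mpr hS)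
    (isUnit_nonsing_inv_iff.mpr hR) (by rwa [inv_inv_R, inv_inv_S, add_comm])
  rw [woodbury, inv_inv_S, inv_inv_R, add_comm R, Matrix.sub_mul, Matrix.one_mul]

section

variable {m n α : Type*} [Ring α] [PartialOrder α] [StarRing α] [AddLeftMono α]
  {A : Matrix m m α} {B : Matrix n n α}

theorem posDef_add_conjTranspose_mul_mul [Finite m] [Fintype n] (hA : A.PosDef)
    (hB : B.PosSemidef) (C : Matrix n m α) : (A + Cᴴ * B * C).PosDef :=
  hA.add_posSemidef (hB.conjTranspose_mul_mul_same C)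

theorem posDef_mul_mul_conjTranspose_add [Fintype m] [Finite n] (hA : A.PosSemidef)
    (hB : B.PosDef) (C : Matrix n m α) : (C * A * Cᴴ + B).PosDef :=
  .posSemidef_add (hA.mul_mul_conjTranspose_same C) hB

end

theorem stmt_0_general {m n K : Type*} [Fintype m] [DecidableEq m] [Fintype n] [DecidableEq n]
    [Field K] [PartialOrder K] [StarRing K] [AddLeftMono K]
    {S : Matrix m m K} {R : Matrix n n K} (hS : S.PosDef) (hR : R.PosDef) (C : Matrix n m K) :
    IsUnit (S⁻¹ + Cᴴ * R⁻¹ * C) ∧ IsUnit (C * S * Cᴴ + R) ∧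
      (S⁻¹ + Cᴴ * R⁻¹ * C)⁻¹ =
        (1 - (S * Cᴴ * (C * S * Cᴴ + R)⁻¹) * C) * S := by
  have information_posDef := posDef_add_conjTranspose_mul_mul hS.inv hR.inv.posSemidef C
  have innovation_posDef := posDef_mul_mul_conjTranspose_add hS.posSemidef hR C
  exact ⟨information_posDef.isUnit, innovation_posDef.isUnit,
    inv_inv_add_mul_inv_mul_eq hS.isUnit hR.isUnit innovation_posDef.isUnit⟩

/-- The information-form covariance update equals the standard Kalman filter
covariance update `(I - K C) Σ`, via the matrix inversion lemma. -/
theorem stmt_0 (m n : ℕ) (hm : 0 < m) (hn : 0 < n)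
    (S : Matrix (Fin m) (Fin m) ℝ) (R : Matrix (Fin n) (Fin n) ℝ)
    (C : Matrix (Fin n) (Fin m) ℝ)
    (hS : S.PosDef) (hR : R.PosDef) :
    IsUnit (S⁻¹ + Cᵀ * R⁻¹ * C) ∧ IsUnit (C * S * Cᵀ + R) ∧
      (S⁻¹ + Cᵀ * R⁻¹ * C)⁻¹ =
        (1 - (S * Cᵀ * (C * S * Cᵀ + R)⁻¹) * C) * S := by
  simpa only [conjTranspose_eq_transpose_of_trivial] using stmt_0_general hS hR C
end

section
/- Let m, n be positive integers, let Σ be a symmetric positive definite real m×m matrix, R a symmetric positive definite real n×n matrix, and C a real n×m matrix. Set Σ⁺ := (Σ⁻¹ + Cᵀ R⁻¹ C)⁻¹ and K := Σ Cᵀ (C Σ Cᵀ + R)⁻¹. Then for all x ∈ ℝ^m and z ∈ ℝ^n, xᵀ Σ⁻¹ x + (z − C x)ᵀ R⁻¹ (z − C x) = (x − K z)ᵀ (Σ⁺)⁻¹ (x − K z) + zᵀ (C Σ Cᵀ + R)⁻¹ z. -/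
open Matrix

/-!
Expanded in `(x, z)`, the left-hand side is the quadratic form of the block matrix with diagonal
blocks `P = S⁻¹ + Cᴴ R⁻¹ C` and `R⁻¹` and off-diagonal block `-Cᴴ R⁻¹`. Completing the square in
`x` through the Schur complement of `P` centres the form at `P⁻¹ Cᴴ R⁻¹ z`, which is `K z` by the
push-through identity, and leaves the form `R⁻¹ - R⁻¹ C P⁻¹ Cᴴ R⁻¹` in `z`, which is
`(C S Cᴴ + R)⁻¹` by the Woodbury identity.
-/

section Inverse

variable {m n α : Type*} [Fintype m] [DecidableEq m] [Fintype n] [DecidableEq n] [CommRing α]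
  {S : Matrix m m α} {R : Matrix n n α} {B : Matrix m n α} {C : Matrix n m α}

theorem isUnit_mul_mul_add_of_isUnit_inv_add (hS : IsUnit S) (hR : IsUnit R)
    (hP : IsUnit (S⁻¹ + B * R⁻¹ * C)) : IsUnit (C * S * B + R) := by
  obtain ⟨_⟩ := hS.nonempty_invertible
  obtain ⟨_⟩ := hR.nonempty_invertible
  obtain ⟨iP⟩ := hP.nonempty_invertible
  simp only [← invOf_eq_nonsing_inv] at iP
  let := invertibleAddMulMul R C S B
  rw [add_comm]
  exact isUnit_of_invertible _

theorem inv_add_mul_inv_mul_mul_mul (hS : IsUnit S) (hR : IsUnit R) :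
    (S⁻¹ + B * R⁻¹ * C) * (S * B) = B * R⁻¹ * (C * S * B + R) := by
  obtain ⟨_⟩ := hS.nonempty_invertible
  obtain ⟨_⟩ := hR.nonempty_invertible
  calc (S⁻¹ + B * R⁻¹ * C) * (S * B)
      = B + B * R⁻¹ * C * (S * B) := by
        rw [Matrix.add_mul, inv_mul_cancel_left_of_invertible]
    _ = B * R⁻¹ * (C * S * B + R) := by
        rw [Matrix.mul_add, inv_mul_cancel_right_of_invertible, add_comm]
        simp only [Matrix.mul_assoc]

theorem inv_inv_add_mul_mul_inv_eq_mul_inv_mul_add (hS : IsUnit S) (hR : IsUnit R)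
    (hP : IsUnit (S⁻¹ + B * R⁻¹ * C)) :
    (S⁻¹ + B * R⁻¹ * C)⁻¹ * (B * R⁻¹) = S * B * (C * S * B + R)⁻¹ := by
  obtain ⟨_⟩ := hP.nonempty_invertible
  obtain ⟨_⟩ := (isUnit_mul_mul_add_of_isUnit_inv_add hS hR hP).nonempty_invertible
  rw [inv_mul_eq_iff_eq_mul_of_invertible, ← Matrix.mul_assoc, inv_add_mul_inv_mul_mul_mul hS hR,
    mul_inv_cancel_right_of_invertible]

end Inverse

theorem dotProduct_add_dotProduct_sub_eq_fromBlocks {m n α : Type*} [Fintype m] [Fintype n]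
    [Ring α] [StarRing α] (Q : Matrix m m α) (N : Matrix n n α) (C : Matrix n m α)
    (x : m → α) (z : n → α) :
    star x ⬝ᵥ (Q *ᵥ x) + star (z - C *ᵥ x) ⬝ᵥ (N *ᵥ (z - C *ᵥ x)) =
      star (x ⊕ᵥ z) ᵥ* fromBlocks (Q + Cᴴ * N * C) (-(Cᴴ * N)) (-(N * C)) N ⬝ᵥ (x ⊕ᵥ z) := by
  simp only [Function.star_sumElim, vecMul_fromBlocks, Sum.elim_comp_inl, Sum.elim_comp_inr,
    sumElim_dotProduct_sumElim, star_sub, star_mulVec, dotProduct_mulVec, mulVec_sub, sub_vecMul,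
    vecMul_add, vecMul_neg, add_dotProduct, sub_dotProduct, neg_dotProduct, dotProduct_sub,
    vecMul_vecMul, Matrix.mul_assoc]
  abel

theorem stmt_2_general {m n α : Type*} [Fintype m] [DecidableEq m] [Fintype n] [DecidableEq n]
    [CommRing α] [StarRing α] {S : Matrix m m α} {R : Matrix n n α} (C : Matrix n m α)
    (hS : S.IsHermitian) (hR : R.IsHermitian) (hS_unit : IsUnit S) (hR_unit : IsUnit R)
    (hP : IsUnit (S⁻¹ + Cᴴ * R⁻¹ * C)) :
    let Sp : Matrix m m α := (S⁻¹ + Cᴴ * R⁻¹ * C)⁻¹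
    let K : Matrix m n α := S * Cᴴ * (C * S * Cᴴ + R)⁻¹
    ∀ (x : m → α) (z : n → α),
      star x ⬝ᵥ (S⁻¹ *ᵥ x) + star (z - C *ᵥ x) ⬝ᵥ (R⁻¹ *ᵥ (z - C *ᵥ x)) =
        star (x - K *ᵥ z) ⬝ᵥ (Sp⁻¹ *ᵥ (x - K *ᵥ z)) +
          star z ⬝ᵥ ((C * S * Cᴴ + R)⁻¹ *ᵥ z) := by
  intro Sp K x z
  obtain ⟨_⟩ := hP.nonempty_invertible
  have precision_isHermitian : (S⁻¹ + Cᴴ * R⁻¹ * C).IsHermitian :=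
    hS.inv.add (isHermitian_conjTranspose_mul_mul C hR.inv)
  have precision_eq : Sp⁻¹ = S⁻¹ + Cᴴ * R⁻¹ * C := inv_inv_of_invertible _
  have offDiag_conjTranspose : -(R⁻¹ * C) = (-(Cᴴ * R⁻¹))ᴴ := by
    rw [conjTranspose_neg, conjTranspose_mul, conjTranspose_conjTranspose, hR.inv.eq]
  have center_eq : Sp * -(Cᴴ * R⁻¹) = -K := by
    rw [Matrix.mul_neg, inv_inv_add_mul_mul_inv_eq_mul_inv_mul_add hS_unit hR_unit hP]
  have schur_eq : R⁻¹ - (-(Cᴴ * R⁻¹))ᴴ * Sp * -(Cᴴ * R⁻¹) = (C * S * Cᴴ + R)⁻¹ := by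
    rw [← offDiag_conjTranspose, add_comm (C * S * Cᴴ),
      add_mul_mul_inv_eq_sub R C S Cᴴ hR_unit hS_unit hP]
    simp only [Sp, Matrix.neg_mul, Matrix.mul_neg, neg_neg, Matrix.mul_assoc]
  rw [dotProduct_add_dotProduct_sub_eq_fromBlocks, offDiag_conjTranspose,
    schur_complement_eq₁₁ _ _ _ _ precision_isHermitian, center_eq, schur_eq, precision_eq,
    neg_mulVec, ← sub_eq_add_neg, dotProduct_mulVec, dotProduct_mulVec]

/-- Completion-of-squares identity underlying the Bayesian fusion in the EKF
update step. Here `Σ⁺ = (Σ⁻¹ + Cᵀ R⁻¹ C)⁻¹` and `K = Σ Cᵀ (C Σ Cᵀ + R)⁻¹`. -/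
theorem stmt_2 (m n : ℕ) (hm : 0 < m) (hn : 0 < n)
    (S : Matrix (Fin m) (Fin m) ℝ) (R : Matrix (Fin n) (Fin n) ℝ)
    (C : Matrix (Fin n) (Fin m) ℝ)
    (hS : S.PosDef) (hR : R.PosDef) :
    let Sp : Matrix (Fin m) (Fin m) ℝ := (S⁻¹ + Cᵀ * R⁻¹ * C)⁻¹
    let K : Matrix (Fin m) (Fin n) ℝ := S * Cᵀ * (C * S * Cᵀ + R)⁻¹
    ∀ (x : Fin m → ℝ) (z : Fin n → ℝ),
      x ⬝ᵥ (S⁻¹ *ᵥ x) + (z - C *ᵥ x) ⬝ᵥ (R⁻¹ *ᵥ (z - C *ᵥ x)) =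
        (x - K *ᵥ z) ⬝ᵥ (Sp⁻¹ *ᵥ (x - K *ᵥ z)) +
          z ⬝ᵥ ((C * S * Cᵀ + R)⁻¹ *ᵥ z) := by
  have hP : (S⁻¹ + Cᴴ * R⁻¹ * C).PosDef :=
    hS.inv.add_posSemidef (hR.inv.posSemidef.conjTranspose_mul_mul_same C)
  simpa only [conjTranspose_eq_transpose_of_trivial, star_trivial] using
    stmt_2_general C hS.isHermitian hR.isHermitian hS.isUnit hR.isUnit hP.isUnit
end

section
/- Let m be a positive integer and let S, Σ be symmetric positive definite real m×m matrices. Then trace((Σ⁻¹ − Σ⁻¹ S Σ⁻¹) W) = 0 for every symmetric real m×m matrix W if and only if Σ = S. -/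
open Matrix

/-!
The trace pairing is nondegenerate on symmetric matrices: pairing `A` with `eᵢⱼ + eⱼᵢ` gives
`2 Aᵢⱼ`. As `Σ⁻¹` and `Σ⁻¹ S Σ⁻¹` are both symmetric, the derivative vanishes in all symmetric
directions exactly when they are equal, and cancelling `Σ⁻¹` on both sides turns this into `Σ = S`.
-/

theorem isSymm_mul_mul_transpose {m n R : Type*} [Fintype n] [NonUnitalCommSemiring R]
    {A : Matrix n n R} (B : Matrix m n R) (hA : A.IsSymm) : (B * A * Bᵀ).IsSymm := by
  rw [IsSymm, transpose_mul, transpose_mul, transpose_transpose, hA.eq, Matrix.mul_assoc]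

section TracePairing

variable {n R : Type*} [Fintype n] [NonAssocSemiring R] {A B : Matrix n n R}

theorem trace_mul_single_add_single_of_isSymm [DecidableEq n] (hA : A.IsSymm) (i j : n) :
    (A * (single i j 1 + single j i 1)).trace = 2 * A i j := by
  rw [Matrix.mul_add, trace_add, trace_mul_single, trace_mul_single, hA.apply i j,
    op_smul_eq_mul, mul_one, two_mul]

theorem ext_iff_trace_mul_isSymm (h2 : IsLeftRegular (2 : R)) (hA : A.IsSymm) (hB : B.IsSymm) :
    A = B ↔ ∀ W : Matrix n n R, W.IsSymm → (A * W).trace = (B * W).trace := by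
  classical
  refine ⟨fun hAB W _ ↦ hAB ▸ rfl, fun h ↦ Matrix.ext fun i j ↦ h2 ?_⟩
  have hW : (single i j (1 : R) + single j i 1).IsSymm := by
    simpa only [transpose_single] using isSymm_add_transpose_self (single i j (1 : R))
  calc
    2 * A i j = (A * (single i j 1 + single j i 1)).trace :=
      (trace_mul_single_add_single_of_isSymm hA i j).symm
    _ = (B * (single i j 1 + single j i 1)).trace := h _ hW
    _ = 2 * B i j := trace_mul_single_add_single_of_isSymm hB i j

end TracePairing

section CommRing

variable {n R : Type*} [Fintype n] [DecidableEq n] [CommRing R] {S Sg : Matrix n n R}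

theorem inv_eq_inv_mul_mul_inv_iff (hSg : IsUnit Sg) : Sg⁻¹ = Sg⁻¹ * S * Sg⁻¹ ↔ Sg = S := by
  have hinv : IsUnit Sg⁻¹ := isUnit_nonsing_inv_iff.2 hSg
  calc
    Sg⁻¹ = Sg⁻¹ * S * Sg⁻¹ ↔ Sg⁻¹ * Sg * Sg⁻¹ = Sg⁻¹ * S * Sg⁻¹ := by
      rw [nonsing_inv_mul Sg ((isUnit_iff_isUnit_det Sg).1 hSg), Matrix.one_mul]
    _ ↔ Sg = S := by rw [hinv.mul_left_inj, hinv.mul_right_inj]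

theorem stmt_6_general (h2 : IsLeftRegular (2 : R)) (hS : S.IsSymm) (hSg : Sg.IsSymm)
    (hSg_unit : IsUnit Sg) :
    (∀ W : Matrix n n R, W.IsSymm → ((Sg⁻¹ - Sg⁻¹ * S * Sg⁻¹) * W).trace = 0) ↔ Sg = S := by
  have hconj : (Sg⁻¹ * S * Sg⁻¹).IsSymm := by
    simpa only [hSg.inv.eq] using isSymm_mul_mul_transpose Sg⁻¹ hS
  simp only [Matrix.sub_mul, trace_sub, sub_eq_zero]
  rw [← ext_iff_trace_mul_isSymm h2 hSg.inv hconj, inv_eq_inv_mul_mul_inv_iff hSg_unit]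

end CommRing

/-- The directional derivative `tr((Σ⁻¹ - Σ⁻¹ S Σ⁻¹) W)` of the KL divergence
vanishes in every symmetric direction `W` iff `Σ = S`. -/
theorem stmt_6 (m : ℕ) (hm : 0 < m)
    (S Sg : Matrix (Fin m) (Fin m) ℝ) (hS : S.PosDef) (hSg : Sg.PosDef) :
    (∀ W : Matrix (Fin m) (Fin m) ℝ, W.IsSymm →
        ((Sg⁻¹ - Sg⁻¹ * S * Sg⁻¹) * W).trace = 0) ↔ Sg = S :=
  stmt_6_general (IsRegular.of_ne_zero two_ne_zero).left (isHermitian_iff_isSymm.1 hS.isHermitian)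
    (isHermitian_iff_isSymm.1 hSg.isHermitian) hSg.isUnit
end

section
/- Let m be a positive integer and let S, Σ be symmetric positive definite real m×m matrices. Then log(det Σ) + trace(Σ⁻¹ S) ≥ log(det S) + m, with equality if and only if Σ = S. -/
open Matrix

/-!
Stein's loss `tr A - log det A - n` of a positive definite `n × n` matrix `A` is the sum of
`x - 1 - log x` over its eigenvalues `x`, so it is nonnegative and vanishes only at `A = 1`.
The product `Σ⁻¹ * S` need not be Hermitian, but writing `Σ⁻¹ = Bᴴ * B` shows that it is similar to
the positive definite matrix `B * S * Bᴴ`, and Stein's loss is invariant under similarity.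
-/

theorem log_eq_sub_one_iff {x : ℝ} (hx : 0 < x) : Real.log x = x - 1 ↔ x = 1 := by
  refine ⟨fun h => ?_, fun h => by simp [h]⟩
  by_contra hne
  exact (Real.log_lt_sub_one_of_pos hx hne).ne h

section SteinLoss

open scoped ComplexOrder

variable {𝕜 n : Type*} [RCLike 𝕜] [Fintype n] [DecidableEq n] {A P S Sg : Matrix n n 𝕜}

theorem eigenvalues_eq_one_iff (hA : A.IsHermitian) : hA.eigenvalues = 1 ↔ A = 1 := by
  constructor
  · intro h
    have hdiag : (diagonal (RCLike.ofReal ∘ hA.eigenvalues) : Matrix n n 𝕜) = 1 := by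
      ext i j
      simp [h, one_apply, diagonal_apply]
    rw [hA.spectral_theorem, hdiag, map_one]
  · rintro rfl
    funext i
    have : Nonempty n := ⟨i⟩
    simpa [spectrum.one_eq] using hA.eigenvalues_mem_spectrum_real i

open scoped MatrixOrder in
theorem exists_posDef_mul_eq_units_conj (hP : P.PosDef) (hS : S.PosDef) :
    ∃ (U : (Matrix n n 𝕜)ˣ) (A : Matrix n n 𝕜), A.PosDef ∧ P * S = U.val * A * U⁻¹.val := by
  obtain ⟨B, hB, rfl⟩ :=
    CStarAlgebra.isStrictlyPositive_iff_eq_star_mul_self.mp hP.isStrictlyPositive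
  refine ⟨hB.star.unit, B * S * star B, hB.posDef_star_right_conjugate_iff.mpr hS, ?_⟩
  rw [Units.eq_mul_inv_iff_mul_eq, IsUnit.unit_spec]
  simp only [mul_assoc]

/-- Stein's loss `tr A - log det A - n`: at `A = Σ⁻¹ * S` with real `S` and `Σ` it is twice the
Kullback–Leibler divergence `KL(N(0, S) ‖ N(0, Σ))`. The real parts lose nothing when `A` is similar
to a Hermitian matrix, whose trace and determinant are real. -/
noncomputable def steinLoss (A : Matrix n n 𝕜) : ℝ :=
  RCLike.re A.trace - Real.log (RCLike.re A.det) - Fintype.card n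

theorem steinLoss_units_conj (U : (Matrix n n 𝕜)ˣ) (A : Matrix n n 𝕜) :
    steinLoss (U.val * A * U⁻¹.val) = steinLoss A := by
  simp only [steinLoss, trace_units_conj, det_units_conj]

theorem steinLoss_eq_sum_eigenvalues (hA : A.PosDef) :
    steinLoss A = ∑ i, (hA.1.eigenvalues i - 1 - Real.log (hA.1.eigenvalues i)) := by
  have htrace : RCLike.re A.trace = ∑ i, hA.1.eigenvalues i := by
    rw [hA.1.trace_eq_sum_eigenvalues, ← RCLike.ofReal_sum, RCLike.ofReal_re]
  have hlogdet : Real.log (RCLike.re A.det) = ∑ i, Real.log (hA.1.eigenvalues i) := by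
    rw [hA.1.det_eq_prod_eigenvalues, ← RCLike.ofReal_prod, RCLike.ofReal_re,
      Real.log_prod fun i _ => (hA.eigenvalues_pos i).ne']
  simp only [steinLoss, htrace, hlogdet, Finset.sum_sub_distrib, Finset.sum_const,
    Finset.card_univ, nsmul_eq_mul, mul_one]
  ring

theorem steinLoss_nonneg (hA : A.PosDef) : 0 ≤ steinLoss A := by
  rw [steinLoss_eq_sum_eigenvalues hA]
  exact Finset.sum_nonneg fun i _ =>
    sub_nonneg.mpr (Real.log_le_sub_one_of_pos (hA.eigenvalues_pos i))

theorem steinLoss_eq_zero_iff (hA : A.PosDef) : steinLoss A = 0 ↔ A = 1 := by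
  have hterm_nonneg (i : n) : 0 ≤ hA.1.eigenvalues i - 1 - Real.log (hA.1.eigenvalues i) :=
    sub_nonneg.mpr (Real.log_le_sub_one_of_pos (hA.eigenvalues_pos i))
  have hterm_eq_zero (i : n) :
      hA.1.eigenvalues i - 1 - Real.log (hA.1.eigenvalues i) = 0 ↔ hA.1.eigenvalues i = 1 := by
    rw [sub_eq_zero, eq_comm, log_eq_sub_one_iff (hA.eigenvalues_pos i)]
  rw [steinLoss_eq_sum_eigenvalues hA, ← eigenvalues_eq_one_iff hA.1, funext_iff,
    Finset.sum_eq_zero_iff_of_nonneg fun i _ => hterm_nonneg i]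
  simp only [Finset.mem_univ, true_implies, hterm_eq_zero, Pi.one_apply]

theorem steinLoss_mul_nonneg (hP : P.PosDef) (hS : S.PosDef) : 0 ≤ steinLoss (P * S) := by
  obtain ⟨U, A, hA, hPS⟩ := exists_posDef_mul_eq_units_conj hP hS
  rw [hPS, steinLoss_units_conj]
  exact steinLoss_nonneg hA

theorem steinLoss_mul_eq_zero_iff (hP : P.PosDef) (hS : S.PosDef) :
    steinLoss (P * S) = 0 ↔ P * S = 1 := by
  obtain ⟨U, A, hA, hPS⟩ := exists_posDef_mul_eq_units_conj hP hS
  rw [hPS, steinLoss_units_conj, steinLoss_eq_zero_iff hA, Units.mul_inv_eq_one,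
    ← U.mul_right_inj (b := A), mul_one]

theorem log_re_det_inv_mul (hSg : Sg.PosDef) (hS : S.PosDef) :
    Real.log (RCLike.re (Sg⁻¹ * S).det) =
      Real.log (RCLike.re S.det) - Real.log (RCLike.re Sg.det) := by
  obtain ⟨s, hs, hdetS⟩ := RCLike.pos_iff_exists_ofReal.mp hS.det_pos
  obtain ⟨t, ht, hdetSg⟩ := RCLike.pos_iff_exists_ofReal.mp hSg.det_pos
  rw [det_mul, det_nonsing_inv, Ring.inverse_eq_inv', ← hdetS, ← hdetSg, ← RCLike.ofReal_inv,
    ← RCLike.ofReal_mul, RCLike.ofReal_re, RCLike.ofReal_re, RCLike.ofReal_re, mul_comm,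
    ← div_eq_mul_inv, Real.log_div hs.ne' ht.ne']

theorem stmt_7_general (hS : S.PosDef) (hSg : Sg.PosDef) :
    Real.log (RCLike.re S.det) + Fintype.card n ≤
        Real.log (RCLike.re Sg.det) + RCLike.re (Sg⁻¹ * S).trace ∧
      (Real.log (RCLike.re Sg.det) + RCLike.re (Sg⁻¹ * S).trace =
        Real.log (RCLike.re S.det) + Fintype.card n ↔ Sg = S) := by
  have hloss : Real.log (RCLike.re Sg.det) + RCLike.re (Sg⁻¹ * S).trace =
      Real.log (RCLike.re S.det) + Fintype.card n + steinLoss (Sg⁻¹ * S) := by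
    rw [steinLoss, log_re_det_inv_mul hSg hS]
    ring
  have : Invertible Sg := hSg.isUnit.invertible
  rw [hloss]
  refine ⟨le_add_of_nonneg_right (steinLoss_mul_nonneg hSg.inv hS), ?_⟩
  rw [add_eq_left, steinLoss_mul_eq_zero_iff hSg.inv hS,
    inv_mul_eq_iff_eq_mul_of_invertible, mul_one, eq_comm]

end SteinLoss

/-- `log det Σ + tr(Σ⁻¹ S) ≥ log det S + m`, with equality iff `Σ = S`:
the matched covariance is the unique minimizer of the Gaussian KL objective. -/
theorem stmt_7 (m : ℕ) (hm : 0 < m)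
    (S Sg : Matrix (Fin m) (Fin m) ℝ) (hS : S.PosDef) (hSg : Sg.PosDef) :
    Real.log S.det + m ≤ Real.log Sg.det + (Sg⁻¹ * S).trace ∧
      (Real.log Sg.det + (Sg⁻¹ * S).trace = Real.log S.det + m ↔ Sg = S) := by
  simpa using stmt_7_general hS hSg
end

section
/- Let m be a positive integer, let γ denote the product probability measure on ℝ^m whose coordinates are i.i.d. standard real Gaussians N(0,1), let A be a real m×m matrix with Σ := A Aᵀ, and for z ∈ ℝ^m write x := A z. Let θ : ℝ^m → ℝ^m be a map each of whose components is a polynomial in the coordinates, with θ(0) = 0, and let L := Dθ(0) be its Fréchet derivative at 0. Then there exists a constant C ≥ 0 such that for every t ∈ (0, 1] and all i, j ∈ Fin m, |∫ θ(√t · x)_i θ(√t · x)_j dγ(z) − t (L Σ Lᵀ)_{i j}| ≤ C t². -/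
open Matrix MeasureTheory ProbabilityTheory
open scoped NNReal Polynomial

/-!
If `θ(0) = 0`, then `s ↦ E[θᵢ(s x) θⱼ(s x)]` is a polynomial in `s` without terms of degree `0`
and `1`. Its coefficient of degree `2` is the second moment of the linear part of `θ`, and its
coefficient of degree `3` is a third moment of `x`, hence zero. So the remainder is divisible by
`s ^ 4`, which is `t ^ 2` for `s = √t`. Of the Gaussian law, only the existence of all moments, the
covariance and the vanishing of the third moments matter.
-/

section Dilation

variable {σ R : Type*} [CommSemiring R]

/-- The polynomial `p(s x)`, as a univariate polynomial in the scaling parameter `s` with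
coefficients in the polynomials in `x`. Its coefficient of degree `n` is the homogeneous component
of `p` of degree `n`. Collecting these components into one polynomial, rather than using
`MvPolynomial.homogeneousComponent`, makes the construction multiplicative in `p`. -/
noncomputable def dilation : MvPolynomial σ R →ₐ[R] (MvPolynomial σ R)[X] :=
  MvPolynomial.aeval fun i => Polynomial.C (MvPolynomial.X i) * Polynomial.X

theorem eval_map_eval_dilation (p : MvPolynomial σ R) (x : σ → R) (s : R) :
    ((dilation p).map (MvPolynomial.eval x)).eval s = MvPolynomial.eval (s • x) p := by
  induction p using MvPolynomial.induction_on with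
  | C a => simp [dilation]
  | add p q hp hq => simp only [map_add, Polynomial.map_add, Polynomial.eval_add, hp, hq]
  | mul_X p i hp =>
    rw [map_mul, Polynomial.map_mul, Polynomial.eval_mul, hp, map_mul]
    simp [dilation, -Polynomial.X_mul_C, mul_comm]

theorem isHomogeneous_coeff_dilation (p : MvPolynomial σ R) (n : ℕ) :
    ((dilation p).coeff n).IsHomogeneous n := by
  induction p using MvPolynomial.induction_on generalizing n with
  | C a =>
    rw [dilation, MvPolynomial.algHom_C, Polynomial.algebraMap_apply, Polynomial.coeff_C]
    split_ifs with hn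
    · exact hn ▸ MvPolynomial.isHomogeneous_C σ a
    · exact MvPolynomial.isHomogeneous_zero σ R n
  | add p q hp hq => simpa only [map_add, Polynomial.coeff_add] using (hp n).add (hq n)
  | mul_X p i hp =>
    have hmul : dilation (p * MvPolynomial.X i) =
        dilation p * Polynomial.C (MvPolynomial.X i) * Polynomial.X := by
      simp [dilation, mul_assoc]
    rw [hmul]
    cases n with
    | zero => simpa using MvPolynomial.isHomogeneous_zero σ R 0
    | succ n => simpa using (hp n).mul (MvPolynomial.isHomogeneous_X R i)

theorem coeff_zero_dilation (p : MvPolynomial σ R) :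
    (dilation p).coeff 0 = MvPolynomial.C (MvPolynomial.constantCoeff p) := by
  induction p using MvPolynomial.induction_on with
  | C a => simp [dilation]
  | add p q hp hq => simp only [map_add, Polynomial.coeff_add, hp, hq]
  | mul_X p i => simp [dilation]

theorem coeff_one_dilation_mul {p q : MvPolynomial σ R}
    (hp : MvPolynomial.constantCoeff p = 0) (hq : MvPolynomial.constantCoeff q = 0) :
    (dilation (p * q)).coeff 1 = 0 := by
  simp [Polynomial.mul_coeff_one, coeff_zero_dilation, hp, hq]

theorem coeff_two_dilation_mul {p q : MvPolynomial σ R}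
    (hp : MvPolynomial.constantCoeff p = 0) (hq : MvPolynomial.constantCoeff q = 0) :
    (dilation (p * q)).coeff 2 = (dilation p).coeff 1 * (dilation q).coeff 1 := by
  simp [Polynomial.coeff_mul, Finset.Nat.antidiagonal_succ, coeff_zero_dilation, hp, hq]

theorem eval_coeff_one_dilation {𝕜 : Type*} [NontriviallyNormedField 𝕜] [Finite σ]
    {p : MvPolynomial σ 𝕜} {l : (σ → 𝕜) →L[𝕜] 𝕜}
    (hl : HasFDerivAt (fun x => MvPolynomial.eval x p) l 0) (x : σ → 𝕜) :
    MvPolynomial.eval x ((dilation p).coeff 1) = l x := by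
  have := Fintype.ofFinite σ
  have h_line : HasDerivAt (fun s : 𝕜 => MvPolynomial.eval (s • x) p) (l x) 0 := by
    rw [← zero_smul 𝕜 x] at hl
    exact hl.comp_hasDerivAt (0 : 𝕜) (by simpa using (hasDerivAt_id (0 : 𝕜)).smul_const x)
  have h_poly := ((dilation p).map (MvPolynomial.eval x)).hasDerivAt 0
  simp only [eval_map_eval_dilation] at h_poly
  rw [h_line.unique h_poly, ← Polynomial.coeff_zero_eq_eval_zero, Polynomial.coeff_derivative]
  simp

theorem eval_smul_of_isHomogeneous {p : MvPolynomial σ R} {n : ℕ} (hp : p.IsHomogeneous n)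
    (s : R) (x : σ → R) : MvPolynomial.eval (s • x) p = s ^ n * MvPolynomial.eval x p := by
  simp only [MvPolynomial.eval_eq, Finset.mul_sum]
  refine Finset.sum_congr rfl fun d hd => ?_
  have h_degree : ∑ i ∈ d.support, d i = n := (hp.degree_eq_sum_deg_support hd).symm
  simp only [Pi.smul_apply, smul_eq_mul, mul_pow, Finset.prod_mul_distrib,
    Finset.prod_pow_eq_pow_sum, h_degree]
  ring

end Dilation

theorem exists_abs_eval_le_of_X_pow_dvd {f : ℝ[X]} {k : ℕ} (hf : Polynomial.X ^ k ∣ f) :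
    ∃ C : ℝ, ∀ s ∈ Set.Icc (0 : ℝ) 1, |f.eval s| ≤ C * s ^ k := by
  obtain ⟨g, rfl⟩ := hf
  obtain ⟨C, hC⟩ := isCompact_Icc.exists_bound_of_continuousOn
    (g.continuous.continuousOn (s := Set.Icc (0 : ℝ) 1))
  refine ⟨C, fun s hs => ?_⟩
  rw [Polynomial.eval_mul, Polynomial.eval_pow, Polynomial.eval_X, abs_mul,
    abs_of_nonneg (pow_nonneg hs.1 k), mul_comm]
  exact mul_le_mul_of_nonneg_right (hC s hs) (pow_nonneg hs.1 k)

section Moments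

variable {Ω σ : Type*} [MeasurableSpace Ω] {P : Measure Ω} {X : Ω → σ → ℝ}

theorem memLp_mvPolynomial_eval [IsFiniteMeasure P] (hX : ∀ i (q : ℝ≥0), MemLp (fun ω => X ω i) q P)
    (p : MvPolynomial σ ℝ) (q : ℝ≥0) : MemLp (fun ω => MvPolynomial.eval (X ω) p) q P := by
  induction p using MvPolynomial.induction_on generalizing q with
  | C a => simpa using memLp_const a
  | add p₁ p₂ h₁ h₂ => simpa using! (h₁ q).add (h₂ q)
  | mul_X p i hp =>
    have h_holder : ENNReal.HolderTriple ((2 * q : ℝ≥0) : ENNReal) ((2 * q : ℝ≥0) : ENNReal) q := by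
      constructor
      rw [ENNReal.coe_mul, ENNReal.coe_ofNat, ENNReal.mul_inv (by simp) (by simp), ← add_mul,
        ENNReal.inv_two_add_inv_two, one_mul]
    simpa using! (hX i (2 * q)).mul' (hp (2 * q))

theorem integrable_mvPolynomial_eval [IsFiniteMeasure P]
    (hX : ∀ i (q : ℝ≥0), MemLp (fun ω => X ω i) q P) (p : MvPolynomial σ ℝ) :
    Integrable (fun ω => MvPolynomial.eval (X ω) p) P :=
  memLp_one_iff_integrable.1 (memLp_mvPolynomial_eval hX p 1)

theorem exists_polynomial_integral_eval_smul
    (hX : ∀ p : MvPolynomial σ ℝ, Integrable (fun ω => MvPolynomial.eval (X ω) p) P)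
    (p : MvPolynomial σ ℝ) :
    ∃ f : ℝ[X], (∀ s, f.eval s = ∫ ω, MvPolynomial.eval (s • X ω) p ∂P) ∧
      ∀ n, f.coeff n = ∫ ω, MvPolynomial.eval (X ω) ((dilation p).coeff n) ∂P := by
  refine ⟨∑ n ∈ Finset.range ((dilation p).natDegree + 1),
    Polynomial.monomial n (∫ ω, MvPolynomial.eval (X ω) ((dilation p).coeff n) ∂P),
    fun s => ?_, fun n => ?_⟩
  · have h_expand (ω : Ω) : MvPolynomial.eval (s • X ω) p =
        ∑ n ∈ Finset.range ((dilation p).natDegree + 1),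
          MvPolynomial.eval (X ω) ((dilation p).coeff n) * s ^ n := by
      rw [← eval_map_eval_dilation, Polynomial.eval_map, Polynomial.eval₂_eq_sum_range]
    simp_rw [h_expand, Polynomial.eval_finsetSum, Polynomial.eval_monomial]
    rw [integral_finsetSum _ fun n _ => (hX _).mul_const _]
    simp_rw [integral_mul_const]
  · simp only [Polynomial.finsetSum_coeff, Polynomial.coeff_monomial, Finset.sum_ite_eq',
      Finset.mem_range]
    split_ifs with hn
    · rfl
    · simp [Polynomial.coeff_eq_zero_of_natDegree_lt (by omega : (dilation p).natDegree < n)]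

theorem exists_abs_integral_eval_smul_mul_eval_smul_sub_le
    (hX : ∀ p : MvPolynomial σ ℝ, Integrable (fun ω => MvPolynomial.eval (X ω) p) P)
    (hX3 : ∀ p : MvPolynomial σ ℝ, p.IsHomogeneous 3 → ∫ ω, MvPolynomial.eval (X ω) p ∂P = 0)
    {p q : MvPolynomial σ ℝ} (hp : MvPolynomial.constantCoeff p = 0)
    (hq : MvPolynomial.constantCoeff q = 0) :
    ∃ C : ℝ, ∀ s ∈ Set.Icc (0 : ℝ) 1,
      |(∫ ω, MvPolynomial.eval (s • X ω) p * MvPolynomial.eval (s • X ω) q ∂P) -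
        s ^ 2 * ∫ ω, MvPolynomial.eval (X ω) ((dilation p).coeff 1) *
          MvPolynomial.eval (X ω) ((dilation q).coeff 1) ∂P| ≤ C * s ^ 4 := by
  obtain ⟨f, hf_eval, hf_coeff⟩ := exists_polynomial_integral_eval_smul hX (p * q)
  have h0 : f.coeff 0 = 0 := by rw [hf_coeff, coeff_zero_dilation, map_mul, hp]; simp
  have h1 : f.coeff 1 = 0 := by rw [hf_coeff, coeff_one_dilation_mul hp hq]; simp
  have h3 : f.coeff 3 = 0 := by rw [hf_coeff, hX3 _ (isHomogeneous_coeff_dilation _ 3)]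
  have h_dvd : Polynomial.X ^ 4 ∣ f - Polynomial.monomial 2 (f.coeff 2) := by
    rw [Polynomial.X_pow_dvd_iff]
    intro n hn
    interval_cases n <;> simp [Polynomial.coeff_monomial, h0, h1, h3]
  obtain ⟨C, hbound⟩ := exists_abs_eval_le_of_X_pow_dvd h_dvd
  refine ⟨C, fun s hs => ?_⟩
  have h_remainder := hbound s hs
  rw [Polynomial.eval_sub, Polynomial.eval_monomial, hf_eval, hf_coeff,
    coeff_two_dilation_mul hp hq, mul_comm _ (s ^ 2)] at h_remainder
  simpa only [map_mul] using h_remainder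

theorem integral_mulVec_mul_mulVec [Fintype σ] {κ : Type*}
    (hX : ∀ k, MemLp (fun ω => X ω k) 2 P) {S : Matrix σ σ ℝ}
    (hS : ∀ k l, ∫ ω, X ω k * X ω l ∂P = S k l) (B : Matrix κ σ ℝ) (i j : κ) :
    ∫ ω, (B *ᵥ X ω) i * (B *ᵥ X ω) j ∂P = (B * S * Bᵀ) i j := by
  have h_int (k l : σ) : Integrable (fun ω => X ω k * X ω l) P := (hX k).integrable_mul (hX l)
  have h_expand (ω : Ω) : (B *ᵥ X ω) i * (B *ᵥ X ω) j =
      ∑ l, ∑ k, B i k * B j l * (X ω k * X ω l) := by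
    simp only [mulVec, dotProduct, Finset.sum_mul_sum]
    rw [Finset.sum_comm]
    exact Finset.sum_congr rfl fun l _ => Finset.sum_congr rfl fun k _ => by ring
  simp_rw [h_expand]
  rw [integral_finsetSum _ fun l _ => integrable_finsetSum _ fun k _ => (h_int k l).const_mul _]
  simp_rw [integral_finsetSum _ fun k _ => (h_int k _).const_mul _, integral_const_mul, hS,
    mul_apply, transpose_apply, Finset.sum_mul]
  exact Finset.sum_congr rfl fun l _ => Finset.sum_congr rfl fun k _ => by ring

theorem integral_mvPolynomial_eval_eq_zero_of_odd {G : Type*} [MeasurableSpace G] [AddGroup G]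
    [MeasurableNeg G] {μ : Measure G} [μ.IsNegInvariant] {Y : G → σ → ℝ} (hY : Y.Odd)
    {p : MvPolynomial σ ℝ} {n : ℕ} (hp : p.IsHomogeneous n) (hn : Odd n) :
    ∫ z, MvPolynomial.eval (Y z) p ∂μ = 0 := by
  have h_neg (z : G) : MvPolynomial.eval (Y (-z)) p = -MvPolynomial.eval (Y z) p := by
    rw [hY, ← neg_one_smul ℝ (Y z), eval_smul_of_isHomogeneous hp, hn.neg_one_pow, neg_one_mul]
  have h_symm := integral_neg_eq_self (fun z => MvPolynomial.eval (Y z) p) μ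
  simp only [h_neg, integral_neg] at h_symm
  linarith

end Moments

section Pi

variable {ι : Type*} [Fintype ι]

theorem integral_apply_mul_apply_pi [DecidableEq ι] {μ : ι → Measure ℝ}
    [∀ i, IsProbabilityMeasure (μ i)] (hμ : ∀ i, ∫ x, x ∂μ i = 0) (k l : ι) :
    ∫ z, z k * z l ∂Measure.pi μ = diagonal (fun i => ∫ x, x ^ 2 ∂μ i) k l := by
  rw [diagonal_apply]
  split_ifs with hkl
  · subst hkl
    simp_rw [← sq]
    exact integral_comp_eval (μ := μ) (f := fun x : ℝ => x ^ 2) (by fun_prop)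
  · have h_indep := (iIndepFun_pi (μ := μ) (X := fun _ x => x) fun _ => by fun_prop).indepFun hkl
    rw [h_indep.integral_fun_mul_eq_mul_integral (measurable_pi_apply k).aestronglyMeasurable
      (measurable_pi_apply l).aestronglyMeasurable,
      integral_comp_eval (μ := μ) (f := fun x : ℝ => x) (by fun_prop), hμ, zero_mul]

instance isNegInvariant_gaussianReal_zero (v : ℝ≥0) : (gaussianReal 0 v).IsNegInvariant :=
  ⟨gaussianReal_map_neg.trans (by rw [neg_zero])⟩

theorem integral_apply_mul_apply_pi_gaussianReal [DecidableEq ι] (k l : ι) :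
    ∫ z, z k * z l ∂(Measure.pi fun _ : ι => gaussianReal 0 1) = (1 : Matrix ι ι ℝ) k l := by
  have h_variance : ∫ x, x ^ 2 ∂gaussianReal 0 1 = 1 := by
    rw [← variance_of_integral_eq_zero (by fun_prop) integral_id_gaussianReal,
      variance_fun_id_gaussianReal, NNReal.coe_one]
  simpa [h_variance] using integral_apply_mul_apply_pi
    (μ := fun _ : ι => gaussianReal 0 1) (fun _ => integral_id_gaussianReal) k l

theorem memLp_apply_pi_gaussianReal (k : ι) (q : ℝ≥0) :
    MemLp (fun z => z k) q (Measure.pi fun _ : ι => gaussianReal 0 1) :=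
  (memLp_id_gaussianReal q).comp_measurePreserving (measurePreserving_eval _ k)

theorem memLp_mulVec_pi_gaussianReal {κ : Type*} (A : Matrix κ ι ℝ) (i : κ) (q : ℝ≥0) :
    MemLp (fun z => (A *ᵥ z) i) q (Measure.pi fun _ : ι => gaussianReal 0 1) := by
  simpa only [toMvPolynomial_eval_eq_apply] using
    memLp_mvPolynomial_eval memLp_apply_pi_gaussianReal (A.toMvPolynomial i) q

theorem integral_mulVec_mul_mulVec_pi_gaussianReal {κ : Type*} (A : Matrix κ ι ℝ) (i j : κ) :
    ∫ z, (A *ᵥ z) i * (A *ᵥ z) j ∂(Measure.pi fun _ : ι => gaussianReal 0 1) = (A * Aᵀ) i j := by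
  classical
  rw [integral_mulVec_mul_mulVec (fun k => mod_cast memLp_apply_pi_gaussianReal k 2)
    integral_apply_mul_apply_pi_gaussianReal, Matrix.mul_one]

end Pi

theorem stmt_14_general {Ω ι κ : Type*} [MeasurableSpace Ω] [Fintype ι] [DecidableEq ι]
    [Finite κ] {P : Measure Ω} [IsFiniteMeasure P] {X : Ω → ι → ℝ}
    (hX : ∀ i (q : ℝ≥0), MemLp (fun ω => X ω i) q P)
    (hX3 : ∀ p : MvPolynomial ι ℝ, p.IsHomogeneous 3 → ∫ ω, MvPolynomial.eval (X ω) p ∂P = 0)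
    {S : Matrix ι ι ℝ} (hS : ∀ k l, ∫ ω, X ω k * X ω l ∂P = S k l)
    {θ : (ι → ℝ) → κ → ℝ}
    (hpoly : ∀ i, ∃ p : MvPolynomial ι ℝ, ∀ v, θ v i = MvPolynomial.eval v p)
    (h0 : θ 0 = 0) {L : (ι → ℝ) →L[ℝ] κ → ℝ} (hL : HasFDerivAt θ L 0) :
    ∃ C : ℝ, 0 ≤ C ∧ ∀ t ∈ Set.Icc (0 : ℝ) 1, ∀ i j,
      |(∫ ω, θ (√t • X ω) i * θ (√t • X ω) j ∂P) -
        t * (LinearMap.toMatrix' (L : (ι → ℝ) →ₗ[ℝ] κ → ℝ) * S *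
          (LinearMap.toMatrix' (L : (ι → ℝ) →ₗ[ℝ] κ → ℝ))ᵀ) i j| ≤ C * t ^ 2 := by
  choose p hp using hpoly
  have hp0 (i : κ) : MvPolynomial.constantCoeff (p i) = 0 := by
    rw [← MvPolynomial.eval_zero, ← hp, h0, Pi.zero_apply]
  have h_linear (i : κ) (x : ι → ℝ) : MvPolynomial.eval x ((dilation (p i)).coeff 1) =
      (LinearMap.toMatrix' (L : (ι → ℝ) →ₗ[ℝ] κ → ℝ) *ᵥ x) i := by
    have h_deriv := hasFDerivAt_pi'.1 hL i
    simp only [hp] at h_deriv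
    rw [eval_coeff_one_dilation h_deriv, LinearMap.toMatrix'_mulVec]
    rfl
  choose C hC using fun i j => exists_abs_integral_eval_smul_mul_eval_smul_sub_le
    (integrable_mvPolynomial_eval hX) hX3 (hp0 i) (hp0 j)
  obtain ⟨M, hM⟩ := Finite.exists_le fun ij : κ × κ => C ij.1 ij.2
  refine ⟨|M|, abs_nonneg M, fun t ht i j => ?_⟩
  have h_pow_four : √t ^ 4 = t ^ 2 := by rw [pow_mul √t 2 2, Real.sq_sqrt ht.1]
  have h_sqrt := hC i j √t ⟨Real.sqrt_nonneg t, Real.sqrt_le_one.2 ht.2⟩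
  simp only [h_linear, integral_mulVec_mul_mulVec (fun k => mod_cast hX k 2) hS, ← hp, h_pow_four,
    Real.sq_sqrt ht.1] at h_sqrt
  refine h_sqrt.trans ?_
  gcongr
  exact (hM (i, j)).trans (le_abs_self M)

/-- Covariance propagation through a nonlinear (polynomial) map `θ` with
`θ(0) = 0`: under a centered Gaussian with covariance `tΣ`, the second moment
of `θ` equals `t · Dθ(0) Σ Dθ(0)ᵀ` up to an error of order `t²`. -/
theorem stmt_14 (m : ℕ) (hm : 0 < m) (A : Matrix (Fin m) (Fin m) ℝ)
    (θ : (Fin m → ℝ) → (Fin m → ℝ))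
    (hpoly : ∀ i : Fin m, ∃ P : MvPolynomial (Fin m) ℝ,
      ∀ v : Fin m → ℝ, θ v i = MvPolynomial.eval v P)
    (h0 : θ 0 = 0)
    (L : (Fin m → ℝ) →L[ℝ] (Fin m → ℝ))
    (hL : HasFDerivAt θ L 0) :
    ∃ C : ℝ, 0 ≤ C ∧
      ∀ t ∈ Set.Ioc (0 : ℝ) 1, ∀ i j : Fin m,
        |(∫ z, θ (Real.sqrt t • (A *ᵥ z)) i * θ (Real.sqrt t • (A *ᵥ z)) j
            ∂(Measure.pi fun _ : Fin m => gaussianReal 0 1)) -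
          t * ((LinearMap.toMatrix' (L : (Fin m → ℝ) →ₗ[ℝ] (Fin m → ℝ))) * (A * Aᵀ) *
              (LinearMap.toMatrix' (L : (Fin m → ℝ) →ₗ[ℝ] (Fin m → ℝ)))ᵀ) i j| ≤
          C * t ^ 2 := by
  obtain ⟨C, hC, hbound⟩ := stmt_14_general (memLp_mulVec_pi_gaussianReal A)
    (fun _ hp => integral_mvPolynomial_eval_eq_zero_of_odd (fun z => mulVec_neg z A) hp (by decide))
    (integral_mulVec_mul_mulVec_pi_gaussianReal A) hpoly h0 hL
  exact ⟨C, hC, fun t ht => hbound t (Set.Ioc_subset_Icc_self ht)⟩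
end
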